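/- Let Λ be a finite set and X a subshift of Λ^{ℕ∪{0}} whose topological entropy h is strictly positive. Then for every 0 < r < 1 there exists L such that for every l ≥ L there exist two different words α and β of length l, both allowable in X, such that the overlap between α and β, the self-overlap of α, and the self-overlap of β are all smaller than r·l. -/

import Mathlib

open Filter Finset Topology

/-- The left shift on one-sided sequences. -/
def shiftN {Λ : Type*} (x : ℕ → Λ) : ℕ → Λ := fun n => x (n + 1)

/-- The word `w` occurs in `x` starting at coordinate `m`. -/
def OccursAt {Λ : Type*} (w : List Λ) (x : ℕ → Λ) (m : ℕ) : Prop :=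
  ∀ i : Fin w.length, x (m + (i : ℕ)) = w.get i

/-- The word `w` is allowable in `X`: it appears in some point of `X`. -/
def AllowableIn {Λ : Type*} (X : Set (ℕ → Λ)) (w : List Λ) : Prop :=
  ∃ x ∈ X, ∃ m : ℕ, OccursAt w x m

/-- The overlap between two different words `a` and `b`: the largest `k ≥ 1` such that the
last `k` letters of one of them coincide with the first `k` letters of the other (or `0` if
there is no such `k`). -/
noncomputable def wordOverlap {Λ : Type*} (a b : List Λ) : ℕ :=
  sSup ({k | 1 ≤ k ∧ k ≤ a.length ∧ k ≤ b.length ∧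
    (a.drop (a.length - k) = b.take k ∨ b.drop (b.length - k) = a.take k)} ∪ {0})

/-- The self-overlap of a word `a`: the largest `1 ≤ k < length a` such that the last `k`
letters of `a` coincide with its first `k` letters (or `0` if there is no such `k`). -/
noncomputable def selfOverlap {Λ : Type*} (a : List Λ) : ℕ :=
  sSup ({k | 1 ≤ k ∧ k < a.length ∧ a.drop (a.length - k) = a.take k} ∪ {0})

namespace Stmt10

variable {Λ : Type*}

/-- Allowable words of length `n`. -/
def W (X : Set (ℕ → Λ)) (n : ℕ) : Set (List Λ) := {w | w.length = n ∧ AllowableIn X w}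

/-- Complexity function. -/
noncomputable def p (X : Set (ℕ → Λ)) (n : ℕ) : ℕ := (W X n).ncard

lemma W_finite [Fintype Λ] (X : Set (ℕ → Λ)) (n : ℕ) : (W X n).Finite :=
  (List.finite_length_eq Λ n).subset fun _ h => h.1

lemma occurs_iff (w : List Λ) (x : ℕ → Λ) (m : ℕ) :
    OccursAt w x m ↔ ∀ i (h : i < w.length), x (m + i) = w[i] :=
  ⟨fun H i h => H ⟨i, h⟩, fun H i => H i i.2⟩

lemma allow_take {X : Set (ℕ → Λ)} {w : List Λ} (h : AllowableIn X w) (k : ℕ) :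
    AllowableIn X (w.take k) := by
  obtain ⟨x, hx, m, hm⟩ := h
  refine ⟨x, hx, m, ?_⟩
  rw [occurs_iff] at *
  intro i hi
  rw [List.getElem_take]
  exact hm i _

lemma allow_drop {X : Set (ℕ → Λ)} {w : List Λ} (h : AllowableIn X w) (k : ℕ) :
    AllowableIn X (w.drop k) := by
  obtain ⟨x, hx, m, hm⟩ := h
  refine ⟨x, hx, m + k, ?_⟩
  rw [occurs_iff] at *
  intro i hi
  rw [List.getElem_drop, add_assoc]
  exact hm _ _

lemma prefix_mem {X : Set (ℕ → Λ)} {x : ℕ → Λ} (hx : x ∈ X) (m n : ℕ) :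
    (List.range n).map (fun i => x (m + i)) ∈ W X n := by
  refine ⟨by simp, x, hx, m, ?_⟩
  rw [occurs_iff]
  intro i hi
  simp

lemma take_mem {X : Set (ℕ → Λ)} {n k : ℕ} {w : List Λ} (h : w ∈ W X n) (hk : k ≤ n) :
    w.take k ∈ W X k := ⟨by simp [h.1, hk], allow_take h.2 k⟩

lemma drop_mem {X : Set (ℕ → Λ)} {n k : ℕ} {w : List Λ} (h : w ∈ W X n) :
    w.drop k ∈ W X (n - k) := ⟨by simp [h.1], allow_drop h.2 k⟩

lemma p_mono [Fintype Λ] (X : Set (ℕ → Λ)) : Monotone (p X) := by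
  intro a b hab
  have : W X a ⊆ (fun w : List Λ => w.take a) '' W X b := by
    rintro w ⟨hl, x, hx, m, hm⟩
    refine ⟨_, prefix_mem hx m b, ?_⟩
    rw [occurs_iff] at hm
    apply List.ext_getElem
    · simp [hl, hab]
    · intro i h1 h2
      simp [hm i h2]
  exact (Set.ncard_le_ncard this ((W_finite X b).image _)).trans
    (Set.ncard_image_le (W_finite X b))

lemma p_pos [Fintype Λ] {X : Set (ℕ → Λ)} (hX : X.Nonempty) (n : ℕ) : 0 < p X n := by
  obtain ⟨x, hx⟩ := hX
  exact (Set.ncard_pos (W_finite X n)).2 ⟨_, prefix_mem hx 0 n⟩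

lemma p_submul [Fintype Λ] (X : Set (ℕ → Λ)) (m n : ℕ) : p X (m + n) ≤ p X m * p X n := by
  unfold p
  rw [← Set.ncard_prod]
  refine Set.ncard_le_ncard_of_injOn (fun w : List Λ => (w.take m, w.drop m)) ?_ ?_
    ((W_finite X m).prod (W_finite X n))
  · intro w hw
    refine ⟨take_mem hw (by omega), ?_⟩
    have := drop_mem (k := m) hw
    simpa using this
  · intro a _ b _ hab
    simp only [Prod.mk.injEq] at hab
    rw [← List.take_append_drop m a, ← List.take_append_drop m b, hab.1, hab.2]

/-- bad words -/
def B (X : Set (ℕ → Λ)) (l : ℕ) (a : List Λ) (j : ℕ) : Set (List Λ) :=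
  {b ∈ W X l | b.take (l - j) = a.drop j} ∪ {b ∈ W X l | b.drop j = a.take (l - j)} ∪
    {b ∈ W X l | 0 < j ∧ b.drop j = b.take (l - j)}

lemma per_ext {l j : ℕ} (hj : 0 < j) {b c : List Λ} (hb : b.length = l)
    (hc : c.length = l) (hb' : b.drop j = b.take (l - j)) (hc' : c.drop j = c.take (l - j))
    (h : b.take j = c.take j) : b = c := by
  have key : ∀ i : ℕ, b[i]? = (c)[i]? := by
    intro i
    induction i using Nat.strong_induction_on with
    | _ i ih =>
      by_cases hi : i < j
      · have := congrArg (fun w : List Λ => w[i]?) h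
        simpa [List.getElem?_take, hi] using this
      by_cases hl : i < l
      · have h1 := congrArg (fun w : List Λ => w[i - j]?) hb'
        have h2 := congrArg (fun w : List Λ => w[i - j]?) hc'
        have e : j + (i - j) = i := by omega
        have e2 : i - j < l - j := by omega
        simp only [List.getElem?_drop, List.getElem?_take, e, e2, if_true] at h1 h2
        rw [h1, h2]
        exact ih _ (by omega)
      · rw [List.getElem?_eq_none (by omega), List.getElem?_eq_none (by omega)]
  exact List.ext_getElem? key

lemma B_card [Fintype Λ] (X : Set (ℕ → Λ)) (l m : ℕ) (a : List Λ) (j : ℕ) (hjm : j ≤ m)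
    (hml : m ≤ l) : (B X l a j).ncard ≤ 3 * p X m := by
  have hj : p X j ≤ p X m := p_mono X hjm
  have h1 : {b ∈ W X l | b.take (l - j) = a.drop j}.ncard ≤ p X j := by
    refine Set.ncard_le_ncard_of_injOn (fun w : List Λ => w.drop (l - j)) ?_ ?_ (W_finite X j)
    · intro w hw
      have := drop_mem (k := l - j) hw.1
      rwa [show l - (l - j) = j by omega] at this
    · intro b hb c hc hbc
      dsimp only at hbc
      rw [← List.take_append_drop (l - j) b, ← List.take_append_drop (l - j) c, hbc, hb.2, hc.2]
  have h2 : {b ∈ W X l | b.drop j = a.take (l - j)}.ncard ≤ p X j := by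
    refine Set.ncard_le_ncard_of_injOn (fun w : List Λ => w.take j) ?_ ?_ (W_finite X j)
    · intro w hw
      exact take_mem hw.1 (by omega)
    · intro b hb c hc hbc
      dsimp only at hbc
      rw [← List.take_append_drop j b, ← List.take_append_drop j c, hbc, hb.2, hc.2]
  have h3 : {b ∈ W X l | 0 < j ∧ b.drop j = b.take (l - j)}.ncard ≤ p X j := by
    refine Set.ncard_le_ncard_of_injOn (fun w : List Λ => w.take j) ?_ ?_ (W_finite X j)
    · intro w hw
      exact take_mem hw.1 (by omega)
    · intro b hb c hc hbc
      exact per_ext hb.2.1 hb.1.1 hc.1.1 hb.2.2 hc.2.2 hbc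
  have h4 := Set.ncard_union_le ({b ∈ W X l | b.take (l - j) = a.drop j} ∪
    {b ∈ W X l | b.drop j = a.take (l - j)})
    {b ∈ W X l | 0 < j ∧ b.drop j = b.take (l - j)}
  have h5 := Set.ncard_union_le {b ∈ W X l | b.take (l - j) = a.drop j}
    {b ∈ W X l | b.drop j = a.take (l - j)}
  unfold B
  omega

lemma exists_good [Fintype Λ] (X : Set (ℕ → Λ)) (l m : ℕ) (hml : m ≤ l)
    (hlt : (m + 1) * (3 * p X m) < p X l) (a : List Λ) :
    ∃ b ∈ W X l, ∀ j ≤ m, b ∉ B X l a j := by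
  by_contra! hcon
  have hsub : W X l ⊆ ⋃ j ∈ Finset.range (m + 1), B X l a j := by
    intro b hb
    obtain ⟨j, hj, hbj⟩ := hcon b hb
    simp only [Set.mem_iUnion, Finset.mem_range]
    exact ⟨j, by omega, hbj⟩
  have hfin : (⋃ j ∈ Finset.range (m + 1), B X l a j).Finite := by
    refine (W_finite X l).subset ?_
    intro b hb
    simp only [Set.mem_iUnion] at hb
    obtain ⟨j, -, hb⟩ := hb
    rcases hb with (hb | hb) | hb <;> exact hb.1
  have h1 := Set.ncard_le_ncard hsub hfin
  have h2 := Finset.set_ncard_biUnion_le (Finset.range (m + 1)) (fun j => B X l a j)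
  have h3 : ∑ j ∈ Finset.range (m + 1), (B X l a j).ncard ≤
      ∑ j ∈ Finset.range (m + 1), 3 * p X m :=
    Finset.sum_le_sum fun j hj => B_card X l m a j (by simp at hj; omega) hml
  simp only [Finset.sum_const, Finset.card_range, smul_eq_mul] at h3
  unfold p at *
  omega

lemma unif [UniformSpace Λ] {U : Set ((ℕ → Λ) × (ℕ → Λ))} (hU : U ∈ uniformity (ℕ → Λ)) :
    ∃ N : ℕ, ∀ x y : ℕ → Λ, (∀ i < N, x i = y i) → (x, y) ∈ U := by
  have hle : (⨅ N : ℕ, 𝓟 {q : (ℕ → Λ) × (ℕ → Λ) | ∀ i < N, q.1 i = q.2 i}) ≤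
      uniformity (ℕ → Λ) := by
    rw [Pi.uniformity]
    refine le_iInf fun i => iInf_le_of_le (i + 1) ?_
    rintro S ⟨V, hV, hVS⟩
    rw [mem_principal]
    intro q hq
    apply hVS
    have := hq i (by omega)
    simp only [Set.mem_preimage]
    rw [this]
    exact refl_mem_uniformity hV
  have h := hle hU
  rw [mem_iInf_of_directed] at h
  · obtain ⟨N, hN⟩ := h
    exact ⟨N, fun x y hxy => hN hxy⟩
  · intro a b
    refine ⟨max a b, ?_, ?_⟩ <;>
    · simp only [ge_iff_le, le_principal_iff, mem_principal]
      intro q hq i hi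
      exact hq i (by omega)

lemma iter_shift (k : ℕ) (x : ℕ → Λ) (i : ℕ) : (shiftN^[k] x) i = x (i + k) := by
  induction k generalizing x with
  | zero => rfl
  | succ k ih =>
    rw [Function.iterate_succ_apply, ih]
    simp [shiftN, add_assoc]

lemma cover_le [Fintype Λ] (X : Set (ℕ → Λ)) (U : Set ((ℕ → Λ) × (ℕ → Λ))) (N : ℕ)
    (hN : ∀ x y : ℕ → Λ, (∀ i < N, x i = y i) → (x, y) ∈ U) (n : ℕ) :
    Dynamics.coverMincard shiftN X U n ≤ (p X (n + N) : ℕ∞) := by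
  classical
  let f : (ℕ → Λ) → List Λ := fun x => (List.range (n + N)).map (fun i => x (0 + i))
  have hsub : f '' X ⊆ W X (n + N) := by
    rintro _ ⟨x, hx, rfl⟩
    exact prefix_mem hx 0 _
  have hfin : (f '' X).Finite := (W_finite X _).subset hsub
  rcases isEmpty_or_nonempty (ℕ → Λ) with he | he
  · have : X = ∅ := Set.eq_empty_of_isEmpty X
    subst this
    simp
  let g := Function.invFunOn f X
  let s : Finset (ℕ → Λ) := hfin.toFinset.image g
  have hs : Dynamics.IsDynCoverOf shiftN X U n (s : Set (ℕ → Λ)) := by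
    intro x hx
    refine ⟨g (f x), ?_, ?_⟩
    · simp only [s, Finset.coe_image, Set.Finite.coe_toFinset]
      exact ⟨_, ⟨x, hx, rfl⟩, rfl⟩
    · have h1 : f (g (f x)) = f x := Function.invFunOn_eq (f := f) (s := X) ⟨x, hx, rfl⟩
      have h2 : ∀ i < n + N, g (f x) i = x i := by
        intro i hi
        have := congrArg (fun w : List Λ => w[i]?) h1
        simpa [f, hi] using this
      rw [Dynamics.mem_dynEntourage]
      intro k hk
      apply hN
      intro i hi
      rw [iter_shift, iter_shift, h2 _ (by omega)]
  refine hs.coverMincard_le_card.trans ?_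
  have : s.card ≤ p X (n + N) := by
    refine Finset.card_image_le.trans ?_
    rw [← Set.ncard_eq_toFinset_card _ hfin]
    exact Set.ncard_le_ncard hsub (W_finite X _)
  exact_mod_cast this

lemma freq [Fintype Λ] [UniformSpace Λ] (X : Set (ℕ → Λ)) (hX : X.Nonempty)
    (hent : 0 < Dynamics.coverEntropy shiftN X) :
    ∃ a : ℝ, 0 < a ∧ ∃ N : ℕ, ∃ᶠ n : ℕ in atTop, a * n ≤ Real.log (p X (n + N)) := by
  unfold Dynamics.coverEntropy at hent
  simp only [lt_iSup_iff] at hent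
  obtain ⟨U, hU, h⟩ := hent
  obtain ⟨N, hN⟩ := unif hU
  obtain ⟨a, ha0, ha⟩ := EReal.lt_iff_exists_real_btwn.1 h
  refine ⟨a, by exact_mod_cast ha0, N, ?_⟩
  have hf := Filter.frequently_lt_of_lt_limsup (by isBoundedDefault) ha
  refine (hf.and_eventually (eventually_ge_atTop 1)).mono ?_
  rintro n ⟨hn, hn1⟩
  have h1 : ((Dynamics.coverMincard shiftN X U n : ℕ∞) : ENNReal) ≤ ENNReal.ofReal (p X (n + N)) := by
    have := ENat.toENNReal_le.2 (cover_le X U N hN n)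
    simpa using this
  have h2 := ENNReal.log_monotone h1
  rw [ENNReal.log_ofReal_of_pos (by exact_mod_cast p_pos hX _)] at h2
  have h3 : (a : EReal) < (Real.log (p X (n + N)) : EReal) / n :=
    hn.trans_le (EReal.div_le_div_right_of_nonneg (by positivity) h2)
  have h4 : (a : EReal) < ((Real.log (p X (n + N)) / n : ℝ) : EReal) := by
    rw [EReal.coe_div]; exact_mod_cast h3
  have h5 : a < Real.log (p X (n + N)) / n := by exact_mod_cast h4
  have hn0 : (0 : ℝ) < n := by exact_mod_cast hn1
  exact ((lt_div_iff₀ hn0).1 h5).le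

lemma growth [Fintype Λ] [UniformSpace Λ] (X : Set (ℕ → Λ)) (hX : X.Nonempty)
    (hent : 0 < Dynamics.coverEntropy shiftN X) (r : ℝ) (hr0 : 0 < r) (hr1 : r < 1) :
    ∃ L : ℕ, ∀ l ≥ L, ∀ m : ℕ, (m : ℝ) ≤ (1 - r) * l → (m + 1) * (3 * p X m) < p X l := by
  obtain ⟨a, ha, N, hfreq⟩ := freq X hX hent
  set u : ℕ → ℝ := fun n => Real.log (p X n) with hu
  have hpos : ∀ n, (0 : ℝ) < p X n := fun n => by exact_mod_cast p_pos hX n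
  have hu0 : ∀ n, 0 ≤ u n := fun n => Real.log_natCast_nonneg _
  have hsub : Subadditive u := by
    intro m n
    rw [hu]
    dsimp only
    rw [← Real.log_mul (hpos m).ne' (hpos n).ne']
    exact Real.log_le_log (hpos _) (by exact_mod_cast p_submul X m n)
  have hmono : Monotone u := fun m n h =>
    Real.log_le_log (hpos _) (by exact_mod_cast p_mono X h)
  have hbdd : BddBelow (Set.range fun n => u n / n) := by
    refine ⟨0, ?_⟩
    rintro _ ⟨n, rfl⟩
    exact div_nonneg (hu0 n) n.cast_nonneg
  have hlim := hsub.tendsto_lim hbdd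
  set h := hsub.lim with hh
  have hah : a ≤ h := by
    have ht : Tendsto (fun n : ℕ => u n / n + u N / n) atTop (𝓝 (h + 0)) :=
      hlim.add (tendsto_const_div_atTop_nhds_zero_nat (u N))
    rw [add_zero] at ht
    by_contra! hlt
    have hev := ht.eventually (gt_mem_nhds hlt)
    obtain ⟨n, hn, hn2, hn3⟩ :=
      (hfreq.and_eventually (hev.and (eventually_ge_atTop 1))).exists
    have hn0 : (0 : ℝ) < n := by exact_mod_cast hn3
    rw [← add_div, div_lt_iff₀ hn0] at hn2
    have := hsub n N
    simp only [hu] at *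
    linarith
  have hh0 : 0 < h := ha.trans_le hah
  obtain ⟨N0, hN0⟩ := eventually_atTop.1
    ((hlim.eventually (gt_mem_nhds (show h < h + h * r / 2 by nlinarith))).and
      (eventually_ge_atTop 1))
  have hup : ∀ m, u m ≤ u N0 + (h + h * r / 2) * m := by
    intro m
    rcases le_total m N0 with hm | hm
    · have := hmono hm
      have : 0 ≤ (h + h * r / 2) * m := by positivity
      linarith
    · obtain ⟨h1, h2⟩ := hN0 m hm
      rw [div_lt_iff₀ (by exact_mod_cast h2)] at h1
      linarith [hu0 N0]
  have hlow : ∀ l : ℕ, 1 ≤ l → h * l ≤ u l := by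
    intro l hl
    have := hsub.lim_le_div hbdd (n := l) (by omega)
    rwa [le_div_iff₀ (by exact_mod_cast hl)] at this
  have hlog : Tendsto (fun l : ℕ => Real.log l / l) atTop (𝓝 0) := by
    have := Real.isLittleO_log_id_atTop.tendsto_div_nhds_zero
    exact this.comp tendsto_natCast_atTop_atTop
  have hfin : Tendsto (fun l : ℕ => Real.log l / l + (Real.log 6 + u N0) / l) atTop (𝓝 (0 + 0)) :=
    hlog.add (tendsto_const_div_atTop_nhds_zero_nat _)
  rw [add_zero] at hfin
  obtain ⟨L, hL⟩ := eventually_atTop.1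
    ((hfin.eventually (gt_mem_nhds (show 0 < h * r / 2 by positivity))).and
      (eventually_ge_atTop 1))
  refine ⟨L, fun l hl m hm => ?_⟩
  obtain ⟨h1, h2⟩ := hL l hl
  have hl0 : (1 : ℝ) ≤ l := by exact_mod_cast h2
  have hl0' : (0 : ℝ) < l := by linarith
  rw [← add_div, div_lt_iff₀ hl0'] at h1
  have hml : (m : ℝ) + 1 ≤ 2 * l := by nlinarith
  have h3 : Real.log (l * 6 * p X m) < Real.log (p X l) := by
    rw [Real.log_mul (by positivity) (hpos m).ne', Real.log_mul (by positivity) (by norm_num)]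
    have e1 := hup m
    have e2 := hlow l h2
    have e3 : (h + h * r / 2) * m ≤ (h + h * r / 2) * ((1 - r) * l) := by gcongr
    have e4 : 0 ≤ h * r ^ 2 / 2 * l := by positivity
    simp only [hu] at *
    nlinarith
  have h4 := (Real.log_lt_log_iff (by have := hpos m; positivity) (hpos l)).1 h3
  have h5 : ((m : ℝ) + 1) * (3 * p X m) < p X l := by
    have := hpos m
    nlinarith
  exact_mod_cast h5

lemma not_self {X : Set (ℕ → Λ)} {l m : ℕ} {r : ℝ} (hrl : 0 < r * l)
    (hm : ∀ j : ℕ, (j : ℝ) ≤ (1 - r) * l → j ≤ m) {a b : List Λ} (hb : b ∈ W X l)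
    (hB : ∀ j ≤ m, b ∉ B X l a j) : (selfOverlap b : ℝ) < r * l := by
  by_contra! hcon
  have hmem := Nat.sSup_mem
    (s := {k | 1 ≤ k ∧ k < b.length ∧ b.drop (b.length - k) = b.take k} ∪ {0})
    ⟨0, by simp⟩ ⟨b.length, by rintro k (hk | hk); exacts [hk.2.1.le, by simp_all]⟩
  change selfOverlap b ∈ _ at hmem
  generalize selfOverlap b = k at *
  rcases hmem with ⟨h1, h2, h3⟩ | h0
  · rw [hb.1] at h2 h3
    refine hB (l - k) (hm _ ?_) (Or.inr ⟨hb, by omega, ?_⟩)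
    · rw [Nat.cast_sub h2.le]; linarith
    · rwa [show l - (l - k) = k by omega]
  · simp only [Set.mem_singleton_iff] at h0
    subst h0
    simp at hcon
    linarith

lemma not_overlap {X : Set (ℕ → Λ)} {l m : ℕ} {r : ℝ} (hrl : 0 < r * l)
    (hm : ∀ j : ℕ, (j : ℝ) ≤ (1 - r) * l → j ≤ m) {a b : List Λ} (ha : a.length = l)
    (hb : b ∈ W X l)
    (hB : ∀ j ≤ m, b ∉ B X l a j) : (wordOverlap a b : ℝ) < r * l := by
  by_contra! hcon
  have hmem := Nat.sSup_mem
    (s := {k | 1 ≤ k ∧ k ≤ a.length ∧ k ≤ b.length ∧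
    (a.drop (a.length - k) = b.take k ∨ b.drop (b.length - k) = a.take k)} ∪ {0})
    ⟨0, by simp⟩ ⟨b.length, by rintro k (hk | hk); exacts [hk.2.2.1, by simp_all]⟩
  change wordOverlap a b ∈ _ at hmem
  generalize wordOverlap a b = k at *
  rcases hmem with ⟨h1, h2, h2', h3⟩ | h0
  · rw [hb.1, ha] at h3
    rw [ha] at h2
    refine hB (l - k) (hm _ ?_) (Or.inl ?_)
    · rw [Nat.cast_sub h2]; linarith
    · rcases h3 with h3 | h3
      · left; refine ⟨hb, ?_⟩
        rw [show l - (l - k) = k by omega, h3]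
      · right; refine ⟨hb, ?_⟩
        rw [show l - (l - k) = k by omega, h3]
  · simp only [Set.mem_singleton_iff] at h0
    subst h0
    simp at hcon
    linarith

end Stmt10

theorem statement_10
    {Λ : Type*} [Fintype Λ] [UniformSpace Λ] [DiscreteTopology Λ]
    (X : Set (ℕ → Λ)) (hclosed : IsClosed X) (hinv : Set.MapsTo shiftN X X)
    (hent : 0 < Dynamics.coverEntropy shiftN X)
    (r : ℝ) (hr0 : 0 < r) (hr1 : r < 1) :
    ∃ L : ℕ, ∀ l ≥ L, ∃ α β : List Λ,
      α.length = l ∧ β.length = l ∧ α ≠ β ∧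
      AllowableIn X α ∧ AllowableIn X β ∧
      (wordOverlap α β : ℝ) < r * l ∧
      (selfOverlap α : ℝ) < r * l ∧ (selfOverlap β : ℝ) < r * l := by
  rcases Set.eq_empty_or_nonempty X with rfl | hX
  · simp at hent
  obtain ⟨L, hL⟩ := Stmt10.growth X hX hent r hr0 hr1
  refine ⟨max L 1, fun l hl => ?_⟩
  have hl1 : (0 : ℝ) < l := by
    have : 0 < l := by omega
    exact_mod_cast this
  have hrl : 0 < r * l := by positivity
  have hnn : 0 ≤ (1 - r) * l := mul_nonneg (by linarith) hl1.le
  have hfl := Nat.floor_le hnn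
  have hm : ∀ j : ℕ, (j : ℝ) ≤ (1 - r) * l → j ≤ ⌊(1 - r) * (l : ℝ)⌋₊ :=
    fun j hj => Nat.le_floor hj
  have hlt := hL l (by omega) _ hfl
  have hml : ⌊(1 - r) * (l : ℝ)⌋₊ ≤ l := by
    have : ((⌊(1 - r) * (l : ℝ)⌋₊ : ℕ) : ℝ) ≤ l := by nlinarith
    exact_mod_cast this
  obtain ⟨a, ha, hBa⟩ := Stmt10.exists_good X l _ hml hlt []
  obtain ⟨b, hb, hBb⟩ := Stmt10.exists_good X l _ hml hlt a
  refine ⟨a, b, ha.1, hb.1, ?_, ha.2, hb.2, Stmt10.not_overlap hrl hm ha.1 hb hBb,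
    Stmt10.not_self hrl hm ha hBa, Stmt10.not_self hrl hm hb hBb⟩
  rintro rfl
  refine hBb 0 (Nat.zero_le _) (Or.inl (Or.inl ⟨hb, ?_⟩))
  simp [ha.1]
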